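/- Suppose the nonuniform time mesh satisfies: for every k ≥ 2, if ρ* < ρ_k < η then ρ* < ρ_{k+1} ≤ ρ_k²(1+ρ_k)/(1 − 3ρ_k²(1+ρ_k)), and if ρ_k ≥ η then ρ_{k+1} > ρ*. Then the entries of the L2-1_σ matrix satisfy: (i) for all 2 ≤ j ≤ k−1, [M]_{k,j} − [M]_{k,j−1} ≥ (ατ_j/(τ_j + τ_{j+1})) ∫_0^1 (τ_j + τ_{j+1} − sτ_j)(1 − s)(t_k^* − t_{j−1} − sτ_j)^{−α−1} ds, and (ii) for all k ≥ 2, [M]_{k,k} − [M]_{k,k−1} ≥ α/(2(1−α)(στ_k)^α). -/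

import Mathlib

open MeasureTheory Real Finset

noncomputable section

/-- Time step `τ_j = t_j - t_{j-1}`. -/
def tau (t : ℕ → ℝ) (j : ℕ) : ℝ := t j - t (j - 1)

/-- Step ratio `ρ_j = τ_j / τ_{j-1}`. -/
def rho (t : ℕ → ℝ) (j : ℕ) : ℝ := tau t j / tau t (j - 1)

/-- Offset node `t_k^* = t_{k-1} + σ τ_k` with `σ = 1 - α/2`. -/
def tstar (α : ℝ) (t : ℕ → ℝ) (k : ℕ) : ℝ := t (k - 1) + (1 - α / 2) * tau t k

/-- L2-1_σ coefficient `a_j^k`. -/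
def acoef (α : ℝ) (t : ℕ → ℝ) (j k : ℕ) : ℝ :=
  ∫ θ in (0:ℝ)..1,
    (-2 * tau t j * (1 - θ) - tau t (j + 1)) /
      ((tau t j + tau t (j + 1)) * (tstar α t k - (t (j - 1) + θ * tau t j)) ^ α)

/-- L2-1_σ coefficient `c_j^k`. -/
def ccoef (α : ℝ) (t : ℕ → ℝ) (j k : ℕ) : ℝ :=
  ∫ θ in (0:ℝ)..1,
    (tau t j ^ 2 * (2 * θ - 1)) /
      (tau t (j + 1) * (tau t j + tau t (j + 1)) *
        (tstar α t k - (t (j - 1) + θ * tau t j)) ^ α)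

/-- `d_j^k = c_{j-1}^k - a_j^k`. -/
def dcoef (α : ℝ) (t : ℕ → ℝ) (j k : ℕ) : ℝ := ccoef α t (j - 1) k - acoef α t j k

/-- The lower-triangular L2-1_σ matrix `M` (entries vanish above the diagonal and
for column index `0`). -/
def Mentry (α : ℝ) (t : ℕ → ℝ) (k j : ℕ) : ℝ :=
  if j = 0 ∨ k < j then 0
  else if j = k then ccoef α t (k - 1) k + (1 - α / 2) ^ (1 - α) / ((1 - α) * tau t k ^ α)
  else if j = 1 then -acoef α t 1 k
  else dcoef α t j k

end

/-!
Integrating by parts against the kernel `(t_k^* - t_{j-1} - θ τ_j)^(-α)` turns the coefficients into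
integrals of nonnegative quadratics against its derivative; in particular
`-a_j^k = (t_k^* - t_{j-1})^(-α) + (the bound in (i))`. Likewise the explicit term of `[M]_{k,k}` is
`(σ τ_k)^(-α) + (the bound in (ii))`, where `σ τ_k = t_k^* - t_{k-1}`. Both bounds therefore reduce
to the column estimate `[M]_{k,m} ≤ c_m^k + (t_k^* - t_m)^(-α)`, that is,
`c_{m-1}^k ≤ c_m^k + a_m^k + (t_k^* - t_m)^(-α)` for `m ≥ 2`. The left side of the latter is an
integral over `[t_{m-2}, t_{m-1}]` and the right side one over `[t_{m-1}, t_m]`. Replacing the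
increasing kernel `(t_k^* - s)^(-α-1)` on both by its value at the common node `t_{m-1}` leaves
`1 / (ρ_m² (1 + ρ_m)) ≤ 3 + 1 / ρ_{m+1}`, which is the mesh condition
`(1 - 3 ρ_m² (1 + ρ_m)) ρ_{m+1} ≤ ρ_m² (1 + ρ_m)` with denominators restored.
-/

section Kernel

variable {A h α β θ : ℝ} {f u u' : ℝ → ℝ}

theorem sub_mul_pos_of_mem_Icc (hA : 0 < A) (hhA : h < A) (hθ : θ ∈ Set.Icc (0 : ℝ) 1) :
    0 < A - θ * h := by
  rcases le_total h 0 with hh | hh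
  · linarith [mul_nonpos_of_nonneg_of_nonpos hθ.1 hh]
  · linarith [mul_le_of_le_one_left hh hθ.2]

theorem continuousOn_sub_mul_rpow (β : ℝ) (hA : 0 < A) (hhA : h < A) :
    ContinuousOn (fun θ : ℝ ↦ (A - θ * h) ^ β) (Set.uIcc 0 1) := by
  rw [Set.uIcc_of_le zero_le_one]
  exact ContinuousOn.rpow_const (by fun_prop)
    fun θ hθ ↦ Or.inl (sub_mul_pos_of_mem_Icc hA hhA hθ).ne'

theorem hasDerivAt_sub_mul_rpow (β : ℝ) (hθ : A - θ * h ≠ 0) :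
    HasDerivAt (fun θ : ℝ ↦ (A - θ * h) ^ β) (-h * β * (A - θ * h) ^ (β - 1)) θ := by
  have hlin : HasDerivAt (fun θ : ℝ ↦ A - θ * h) (-h) θ := by
    simpa using ((hasDerivAt_id θ).mul_const h).const_sub A
  exact hlin.rpow_const (Or.inl hθ)

theorem intervalIntegrable_div_sub_mul_rpow (hA : 0 < A) (hhA : h < A)
    (hf : IntervalIntegrable f volume 0 1) :
    IntervalIntegrable (fun θ : ℝ ↦ f θ / (A - θ * h) ^ α) volume 0 1 := by
  simp only [div_eq_mul_inv]
  refine hf.mul_continuousOn ((continuousOn_sub_mul_rpow α hA hhA).inv₀ fun θ hθ ↦ ?_)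
  rw [Set.uIcc_of_le zero_le_one] at hθ
  exact (rpow_pos_of_pos (sub_mul_pos_of_mem_Icc hA hhA hθ) α).ne'

theorem integral_deriv_div_sub_mul_rpow (hA : 0 < A) (hhA : h < A)
    (hu : ∀ θ ∈ Set.uIcc (0 : ℝ) 1, HasDerivAt u (u' θ) θ)
    (hu' : IntervalIntegrable u' volume 0 1) :
    ∫ θ in (0 : ℝ)..1, u' θ / (A - θ * h) ^ α =
      u 1 * (A - h) ^ (-α) - u 0 * A ^ (-α)
        - α * h * ∫ θ in (0 : ℝ)..1, u θ * (A - θ * h) ^ (-α - 1) := by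
  have hpos : ∀ θ ∈ Set.uIcc (0 : ℝ) 1, 0 < A - θ * h := fun θ hθ ↦
    sub_mul_pos_of_mem_Icc hA hhA (by rwa [Set.uIcc_of_le zero_le_one] at hθ)
  calc ∫ θ in (0 : ℝ)..1, u' θ / (A - θ * h) ^ α
      = ∫ θ in (0 : ℝ)..1, (A - θ * h) ^ (-α) * u' θ :=
        intervalIntegral.integral_congr fun θ hθ ↦ by
          simp only [rpow_neg (hpos θ hθ).le, div_eq_inv_mul]
    _ = (A - 1 * h) ^ (-α) * u 1 - (A - 0 * h) ^ (-α) * u 0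
          - ∫ θ in (0 : ℝ)..1, -h * -α * (A - θ * h) ^ (-α - 1) * u θ :=
        intervalIntegral.integral_mul_deriv_eq_deriv_mul
          (fun θ hθ ↦ hasDerivAt_sub_mul_rpow (-α) (hpos θ hθ).ne') hu
          ((continuousOn_sub_mul_rpow (-α - 1) hA hhA).const_mul (-h * -α)).intervalIntegrable hu'
    _ = u 1 * (A - h) ^ (-α) - u 0 * A ^ (-α)
          - α * h * ∫ θ in (0 : ℝ)..1, u θ * (A - θ * h) ^ (-α - 1) := by
        have hcomm : ∀ θ, -h * -α * (A - θ * h) ^ (-α - 1) * u θ =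
            α * h * (u θ * (A - θ * h) ^ (-α - 1)) := fun θ ↦ by ring
        simp only [hcomm, intervalIntegral.integral_const_mul, one_mul, zero_mul, sub_zero]
        ring

theorem integral_mul_sub_mul_rpow_le (hβ : β ≤ 0) (hh : 0 ≤ h) (hhA : h < A)
    (hf : IntervalIntegrable f volume 0 1) (hf_nonneg : ∀ θ ∈ Set.Icc (0 : ℝ) 1, 0 ≤ f θ) :
    ∫ θ in (0 : ℝ)..1, f θ * (A - θ * h) ^ β ≤ (∫ θ in (0 : ℝ)..1, f θ) * (A - h) ^ β := by
  have hA : 0 < A := hh.trans_lt hhA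
  rw [← intervalIntegral.integral_mul_const]
  refine intervalIntegral.integral_mono_on zero_le_one
    (hf.mul_continuousOn (continuousOn_sub_mul_rpow β hA hhA)) (hf.mul_const _) fun θ hθ ↦ ?_
  have hle : A - h ≤ A - θ * h := sub_le_sub_left (mul_le_of_le_one_left hh hθ.2) A
  exact mul_le_mul_of_nonneg_left (rpow_le_rpow_of_nonpos (sub_pos.2 hhA) hle hβ) (hf_nonneg θ hθ)

theorem le_integral_mul_sub_mul_rpow (hβ : β ≤ 0) (hh : 0 ≤ h) (hhA : h < A)
    (hf : IntervalIntegrable f volume 0 1) (hf_nonneg : ∀ θ ∈ Set.Icc (0 : ℝ) 1, 0 ≤ f θ) :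
    (∫ θ in (0 : ℝ)..1, f θ) * A ^ β ≤ ∫ θ in (0 : ℝ)..1, f θ * (A - θ * h) ^ β := by
  have hA : 0 < A := hh.trans_lt hhA
  rw [← intervalIntegral.integral_mul_const]
  refine intervalIntegral.integral_mono_on zero_le_one (hf.mul_const _)
    (hf.mul_continuousOn (continuousOn_sub_mul_rpow β hA hhA)) fun θ hθ ↦ ?_
  have hle : A - θ * h ≤ A := sub_le_self A (mul_nonneg hθ.1 hh)
  exact mul_le_mul_of_nonneg_left
    (rpow_le_rpow_of_nonpos (sub_mul_pos_of_mem_Icc hA hhA hθ) hle hβ) (hf_nonneg θ hθ)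

end Kernel

section Mesh

variable {α : ℝ} {t : ℕ → ℝ} {j k : ℕ}

theorem tau_pos (hmono : StrictMono t) (hj : 1 ≤ j) : 0 < tau t j :=
  sub_pos.2 (hmono (Nat.sub_lt hj zero_lt_one))

theorem rho_pos (hmono : StrictMono t) (hj : 2 ≤ j) : 0 < rho t j :=
  div_pos (tau_pos hmono (by lia)) (tau_pos hmono (by lia))

theorem tstar_sub_pred_sub_tau : tstar α t k - t (j - 1) - tau t j = tstar α t k - t j := by
  rw [tau]
  ring

theorem lt_tstar (hα : α < 2) (hmono : StrictMono t) (hjk : j < k) : t j < tstar α t k := by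
  have hoffset : 0 < (1 - α / 2) * tau t k :=
    mul_pos (by linarith) (tau_pos hmono (Nat.one_le_of_lt hjk))
  calc t j ≤ t (k - 1) := hmono.monotone (Nat.le_sub_one_of_lt hjk)
    _ < tstar α t k := lt_add_of_pos_right _ hoffset

theorem tau_lt_tstar_sub (hα : α < 2) (hmono : StrictMono t) (hjk : j < k) :
    tau t j < tstar α t k - t (j - 1) := by
  rw [← sub_pos, tstar_sub_pred_sub_tau, sub_pos]
  exact lt_tstar hα hmono hjk

theorem tstar_sub_pred_pos (hα : α < 2) (hmono : StrictMono t) (hjk : j < k) :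
    0 < tstar α t k - t (j - 1) :=
  sub_pos.2 (lt_tstar hα hmono ((Nat.sub_le j 1).trans_lt hjk))

theorem step_ratio_bound_of_lt_or_le {η r q : ℝ} (hη : 0 ≤ η)
    (hη_root : 1 - 3 * η ^ 2 * (1 + η) = 0) (hr : 0 ≤ r) (hq : 0 ≤ q)
    (h : r < η ∧ q ≤ r ^ 2 * (1 + r) / (1 - 3 * r ^ 2 * (1 + r)) ∨ η ≤ r) :
    (1 - 3 * r ^ 2 * (1 + r)) * q ≤ r ^ 2 * (1 + r) := by
  rcases h with ⟨hrη, hqr⟩ | hηr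
  · have hlt : r ^ 2 * (1 + r) < η ^ 2 * (1 + η) := by gcongr
    rwa [le_div_iff₀' (by linarith)] at hqr
  · have hle : η ^ 2 * (1 + η) ≤ r ^ 2 * (1 + r) := by gcongr
    calc (1 - 3 * r ^ 2 * (1 + r)) * q ≤ 0 :=
          mul_nonpos_of_nonpos_of_nonneg (by linarith) hq
      _ ≤ r ^ 2 * (1 + r) := by positivity

theorem cube_div_le_of_step_ratio_bound {x y z : ℝ} (hx : 0 < x) (hy : 0 < y) (hz : 0 < z)
    (h : (1 - 3 * (y / x) ^ 2 * (1 + y / x)) * (z / y) ≤ (y / x) ^ 2 * (1 + y / x)) :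
    x ^ 3 / (y * (x + y)) ≤ y * (3 + y / z) := by
  have hw : 0 < (y / x) ^ 2 * (1 + y / x) := by positivity
  have hq : 0 < z / y := by positivity
  calc x ^ 3 / (y * (x + y)) = y * (1 / ((y / x) ^ 2 * (1 + y / x))) := by field_simp
    _ ≤ y * (3 + 1 / (z / y)) := by
      refine mul_le_mul_of_nonneg_left ?_ hy.le
      rw [add_div' _ _ _ hq.ne', div_le_div_iff₀ hw hq]
      linarith
    _ = y * (3 + y / z) := by rw [one_div_div]

end Mesh

section Coefficients

variable {α : ℝ} {t : ℕ → ℝ} {j k : ℕ}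

theorem neg_acoef_eq_add_integral (hα : α < 2) (hmono : StrictMono t) (hj : 1 ≤ j) (hjk : j < k) :
    -acoef α t j k = (tstar α t k - t (j - 1)) ^ (-α) +
      α * tau t j / (tau t j + tau t (j + 1)) *
        ∫ s in (0 : ℝ)..1,
          (tau t j + tau t (j + 1) - s * tau t j) * (1 - s) *
            (tstar α t k - t (j - 1) - s * tau t j) ^ (-α - 1) := by
  have hx := tau_pos hmono hj
  have hy := tau_pos hmono (Nat.le_add_left 1 j)
  have hA := tstar_sub_pred_pos hα hmono hjk
  have hhA := tau_lt_tstar_sub hα hmono hjk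
  simp only [acoef, ← sub_sub, ← div_div]
  generalize tau t j = x at *
  generalize tau t (j + 1) = y at *
  generalize tstar α t k - t (j - 1) = A at *
  -- This primitive vanishes at `θ = 1`, so only the boundary term at `t_{j-1}` survives.
  have hprim : ∀ θ : ℝ, HasDerivAt (fun θ ↦ (x + y)⁻¹ * ((x + y - θ * x) * (1 - θ)))
      ((-2 * x * (1 - θ) - y) / (x + y)) θ := fun θ ↦
    ((((hasDerivAt_id' θ).mul_const x).const_sub (x + y)).mul
      ((hasDerivAt_id' θ).const_sub 1) |>.const_mul (x + y)⁻¹).congr_deriv (by ring)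
  rw [integral_deriv_div_sub_mul_rpow hA hhA (fun θ _ ↦ hprim θ)
    (Continuous.intervalIntegrable (by fun_prop) 0 1)]
  simp only [mul_assoc (x + y)⁻¹, intervalIntegral.integral_const_mul]
  field_simp
  ring

theorem ccoef_eq_integral (hα : α < 2) (hmono : StrictMono t) (hjk : j < k) :
    ccoef α t j k =
      α * tau t j ^ 3 / (tau t (j + 1) * (tau t j + tau t (j + 1))) *
        ∫ s in (0 : ℝ)..1, s * (1 - s) *
          (tstar α t k - t (j - 1) - s * tau t j) ^ (-α - 1) := by
  have hA := tstar_sub_pred_pos hα hmono hjk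
  have hhA := tau_lt_tstar_sub hα hmono hjk
  simp only [ccoef, ← sub_sub, ← div_div]
  generalize tau t j = x at *
  generalize tau t (j + 1) = y at *
  generalize tstar α t k - t (j - 1) = A at *
  have hprim : ∀ θ : ℝ, HasDerivAt (fun θ ↦ -(x ^ 2 / y / (x + y)) * (θ * (1 - θ)))
      (x ^ 2 * (2 * θ - 1) / y / (x + y)) θ := fun θ ↦
    ((hasDerivAt_id' θ).mul ((hasDerivAt_id' θ).const_sub 1) |>.const_mul
      (-(x ^ 2 / y / (x + y)))).congr_deriv (by ring)
  rw [integral_deriv_div_sub_mul_rpow hA hhA (fun θ _ ↦ hprim θ)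
    (Continuous.intervalIntegrable (by fun_prop) 0 1)]
  simp only [mul_assoc (-(x ^ 2 / y / (x + y))), intervalIntegral.integral_const_mul]
  ring

theorem ccoef_add_acoef_eq_integral (hα : α < 2) (hmono : StrictMono t) (hj : 1 ≤ j)
    (hjk : j < k) :
    ccoef α t j k + acoef α t j k + (tstar α t k - t j) ^ (-α) =
      α * tau t j / tau t (j + 1) *
        ∫ s in (0 : ℝ)..1, s * (tau t j + tau t (j + 1) - s * tau t j) *
          (tstar α t k - t (j - 1) - s * tau t j) ^ (-α - 1) := by
  have hx := tau_pos hmono hj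
  have hy := tau_pos hmono (Nat.le_add_left 1 j)
  have hA := tstar_sub_pred_pos hα hmono hjk
  have hhA := tau_lt_tstar_sub hα hmono hjk
  rw [← tstar_sub_pred_sub_tau]
  simp only [ccoef, acoef, ← sub_sub, ← div_div]
  generalize tau t j = x at *
  generalize tau t (j + 1) = y at *
  generalize tstar α t k - t (j - 1) = A at *
  rw [← intervalIntegral.integral_add
    (intervalIntegrable_div_sub_mul_rpow hA hhA (Continuous.intervalIntegrable (by fun_prop) 0 1))
    (intervalIntegrable_div_sub_mul_rpow hA hhA (Continuous.intervalIntegrable (by fun_prop) 0 1))]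
  -- This primitive vanishes at `θ = 0`, so only the boundary term at `t_j` survives.
  have hprim : ∀ θ : ℝ, HasDerivAt (fun θ ↦ -y⁻¹ * (θ * (x + y - θ * x)))
      ((x ^ 2 * (2 * θ - 1) / y + (-2 * x * (1 - θ) - y)) / (x + y)) θ := fun θ ↦
    ((hasDerivAt_id' θ).mul (((hasDerivAt_id' θ).mul_const x).const_sub (x + y)) |>.const_mul
      (-y⁻¹)).congr_deriv (by field_simp; ring)
  simp only [← add_div]
  rw [integral_deriv_div_sub_mul_rpow hA hhA (fun θ _ ↦ hprim θ)
    (Continuous.intervalIntegrable (by fun_prop) 0 1)]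
  simp only [mul_assoc (-y⁻¹), intervalIntegral.integral_const_mul]
  field_simp
  ring

theorem ccoef_le (hα₀ : 0 ≤ α) (hα : α < 2) (hmono : StrictMono t) (hj : 1 ≤ j) (hjk : j < k) :
    ccoef α t j k ≤
      α / 6 * (tau t j ^ 3 / (tau t (j + 1) * (tau t j + tau t (j + 1)))) *
        (tstar α t k - t j) ^ (-α - 1) := by
  have hx := tau_pos hmono hj
  have hy := tau_pos hmono (Nat.le_add_left 1 j)
  have hhA := tau_lt_tstar_sub hα hmono hjk
  have hmean : ∫ s in (0 : ℝ)..1, s * (1 - s) = 1 / 6 := by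
    simp only [mul_sub, mul_one]
    norm_num [← sq]
  rw [ccoef_eq_integral hα hmono hjk, ← tstar_sub_pred_sub_tau (j := j)]
  generalize tau t j = x at *
  generalize tau t (j + 1) = y at *
  generalize tstar α t k - t (j - 1) = A at *
  calc α * x ^ 3 / (y * (x + y)) * ∫ s in (0 : ℝ)..1, s * (1 - s) * (A - s * x) ^ (-α - 1)
      ≤ α * x ^ 3 / (y * (x + y)) * ((∫ s in (0 : ℝ)..1, s * (1 - s)) * (A - x) ^ (-α - 1)) := by
        gcongr
        exact integral_mul_sub_mul_rpow_le (by linarith) hx.le hhA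
          (Continuous.intervalIntegrable (by fun_prop) 0 1)
          fun s hs ↦ mul_nonneg hs.1 (sub_nonneg.2 hs.2)
    _ = α / 6 * (x ^ 3 / (y * (x + y))) * (A - x) ^ (-α - 1) := by
        rw [hmean]
        ring

theorem le_ccoef_add_acoef (hα₀ : 0 ≤ α) (hα : α < 2) (hmono : StrictMono t) (hj : 1 ≤ j)
    (hjk : j < k) :
    α / 6 * (tau t j * (3 + tau t j / tau t (j + 1))) *
        (tstar α t k - t (j - 1)) ^ (-α - 1) ≤
      ccoef α t j k + acoef α t j k + (tstar α t k - t j) ^ (-α) := by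
  have hx := tau_pos hmono hj
  have hy := tau_pos hmono (Nat.le_add_left 1 j)
  have hhA := tau_lt_tstar_sub hα hmono hjk
  rw [ccoef_add_acoef_eq_integral hα hmono hj hjk]
  generalize tau t j = x at *
  generalize tau t (j + 1) = y at *
  generalize tstar α t k - t (j - 1) = A at *
  have hmean : ∫ s in (0 : ℝ)..1, s * (x + y - s * x) = x / 6 + y / 2 := by
    have hexpand : ∀ s : ℝ, s * (x + y - s * x) = (x + y) * s - x * s ^ 2 := fun s ↦ by ring
    simp only [hexpand]
    rw [intervalIntegral.integral_sub (Continuous.intervalIntegrable (by fun_prop) 0 1)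
      (Continuous.intervalIntegrable (by fun_prop) 0 1), intervalIntegral.integral_const_mul,
      intervalIntegral.integral_const_mul, integral_id, integral_pow]
    ring
  have hnonneg : ∀ s ∈ Set.Icc (0 : ℝ) 1, 0 ≤ s * (x + y - s * x) := fun s hs ↦
    mul_nonneg hs.1 (sub_mul_pos_of_mem_Icc (by positivity) (by linarith) hs).le
  calc α / 6 * (x * (3 + x / y)) * A ^ (-α - 1)
      = α * x / y * ((∫ s in (0 : ℝ)..1, s * (x + y - s * x)) * A ^ (-α - 1)) := by
        rw [hmean]
        field_simp
        ring
    _ ≤ α * x / y * ∫ s in (0 : ℝ)..1, s * (x + y - s * x) * (A - s * x) ^ (-α - 1) := by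
        gcongr
        exact le_integral_mul_sub_mul_rpow (by linarith) hx.le hhA
          (Continuous.intervalIntegrable (by fun_prop) 0 1) hnonneg

theorem ccoef_add_acoef_nonneg (hα₀ : 0 ≤ α) (hα : α < 2) (hmono : StrictMono t) (hj : 1 ≤ j)
    (hjk : j < k) : 0 ≤ ccoef α t j k + acoef α t j k + (tstar α t k - t j) ^ (-α) := by
  have hx := tau_pos hmono hj
  have hy := tau_pos hmono (Nat.le_add_left 1 j)
  have hA := tstar_sub_pred_pos hα hmono hjk
  exact le_trans (by positivity) (le_ccoef_add_acoef hα₀ hα hmono hj hjk)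

theorem ccoef_pred_le (hα₀ : 0 ≤ α) (hα : α < 2) (hmono : StrictMono t) (hj : 2 ≤ j) (hjk : j < k)
    (hratio : (1 - 3 * rho t j ^ 2 * (1 + rho t j)) * rho t (j + 1) ≤
      rho t j ^ 2 * (1 + rho t j)) :
    ccoef α t (j - 1) k ≤ ccoef α t j k + acoef α t j k + (tstar α t k - t j) ^ (-α) := by
  have hupper := ccoef_le hα₀ hα hmono (show 1 ≤ j - 1 by lia) (show j - 1 < k by lia)
  rw [Nat.sub_add_cancel (show 1 ≤ j by lia)] at hupper
  have hA := tstar_sub_pred_pos hα hmono hjk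
  have hsteps : tau t (j - 1) ^ 3 / (tau t j * (tau t (j - 1) + tau t j)) ≤
      tau t j * (3 + tau t j / tau t (j + 1)) :=
    cube_div_le_of_step_ratio_bound (tau_pos hmono (by lia)) (tau_pos hmono (by lia))
      (tau_pos hmono (by lia)) hratio
  calc ccoef α t (j - 1) k
      ≤ α / 6 * (tau t (j - 1) ^ 3 / (tau t j * (tau t (j - 1) + tau t j))) *
          (tstar α t k - t (j - 1)) ^ (-α - 1) := hupper
    _ ≤ α / 6 * (tau t j * (3 + tau t j / tau t (j + 1))) *
          (tstar α t k - t (j - 1)) ^ (-α - 1) := by gcongr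
    _ ≤ ccoef α t j k + acoef α t j k + (tstar α t k - t j) ^ (-α) :=
        le_ccoef_add_acoef hα₀ hα hmono (by lia) hjk

end Coefficients

section Entries

variable {α : ℝ} {t : ℕ → ℝ} {j k : ℕ}

theorem Mentry_one (hk : 1 < k) : Mentry α t k 1 = -acoef α t 1 k := by
  simp [Mentry, hk.ne, hk.not_gt]

theorem Mentry_eq_dcoef (hj : 2 ≤ j) (hjk : j < k) : Mentry α t k j = dcoef α t j k := by
  simp [Mentry, hjk.ne, hjk.not_gt, show j ≠ 0 by lia, show j ≠ 1 by lia]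

theorem Mentry_self (hk : k ≠ 0) :
    Mentry α t k k =
      ccoef α t (k - 1) k + (1 - α / 2) ^ (1 - α) / ((1 - α) * tau t k ^ α) := by
  simp [Mentry, hk]

theorem Mentry_le_ccoef_add_rpow (hα₀ : 0 ≤ α) (hα : α < 2) (hmono : StrictMono t) (hj : 1 ≤ j)
    (hjk : j < k)
    (hratio : 2 ≤ j → (1 - 3 * rho t j ^ 2 * (1 + rho t j)) * rho t (j + 1) ≤
      rho t j ^ 2 * (1 + rho t j)) :
    Mentry α t k j ≤ ccoef α t j k + (tstar α t k - t j) ^ (-α) := by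
  rcases hj.eq_or_lt with rfl | hj
  · rw [Mentry_one hjk]
    linarith [ccoef_add_acoef_nonneg hα₀ hα hmono le_rfl hjk]
  · rw [Mentry_eq_dcoef hj hjk, dcoef]
    linarith [ccoef_pred_le hα₀ hα hmono hj hjk (hratio hj)]

theorem rpow_one_sub_div_eq {τ : ℝ} (hα : α < 2) (hα₁ : α ≠ 1) (hτ : 0 < τ) :
    (1 - α / 2) ^ (1 - α) / ((1 - α) * τ ^ α) =
      α / (2 * (1 - α) * ((1 - α / 2) * τ) ^ α) + ((1 - α / 2) * τ) ^ (-α) := by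
  have hσ : 0 < 1 - α / 2 := by linarith
  have hα₁' : 1 - α ≠ 0 := sub_ne_zero.2 hα₁.symm
  rw [rpow_neg (by positivity), mul_rpow hσ.le hτ.le, rpow_sub hσ, rpow_one]
  field_simp
  ring

end Entries

theorem Mentry_diff_lower_bound_general {α : ℝ} (hα₀ : 0 ≤ α) (hα : α < 2)
    {t : ℕ → ℝ} (hmono : StrictMono t)
    (hratio : ∀ k : ℕ, 2 ≤ k →
      (1 - 3 * rho t k ^ 2 * (1 + rho t k)) * rho t (k + 1) ≤ rho t k ^ 2 * (1 + rho t k)) :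
    (∀ k j : ℕ, 2 ≤ j → j ≤ k - 1 →
      Mentry α t k j - Mentry α t k (j - 1)
        ≥ α * tau t j / (tau t j + tau t (j + 1)) *
            ∫ s in (0 : ℝ)..1,
              (tau t j + tau t (j + 1) - s * tau t j) * (1 - s) *
                (tstar α t k - t (j - 1) - s * tau t j) ^ (-α - 1)) ∧
    (α ≠ 1 → ∀ k : ℕ, 2 ≤ k →
      Mentry α t k k - Mentry α t k (k - 1)
        ≥ α / (2 * (1 - α) * ((1 - α / 2) * tau t k) ^ α)) := by
  refine ⟨fun k j hj hjk ↦ ?_, fun hα₁ k hk ↦ ?_⟩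
  · have hcolumn := Mentry_le_ccoef_add_rpow hα₀ hα hmono (j := j - 1) (k := k) (by lia) (by lia)
      (hratio _)
    have hacoef := neg_acoef_eq_add_integral hα hmono (j := j) (k := k) (by lia) (by lia)
    rw [Mentry_eq_dcoef hj (by lia), dcoef]
    linarith
  · have hcolumn := Mentry_le_ccoef_add_rpow hα₀ hα hmono (j := k - 1) (k := k) (by lia) (by lia)
      (hratio _)
    rw [tstar, add_sub_cancel_left] at hcolumn
    rw [Mentry_self (by lia), rpow_one_sub_div_eq hα hα₁ (tau_pos hmono (by lia))]
    linarith

/-- (Q2): lower bounds on consecutive differences of the entries of the L2-1_σ matrix. -/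
theorem Mentry_diff_lower_bound (α : ℝ) (hα : α ∈ Set.Ioo (0:ℝ) 1)
    (t : ℕ → ℝ) (ht0 : t 0 = 0) (hmono : StrictMono t)
    (ρstar η : ℝ) (hρpos : 0 < ρstar)
    (hρroot : ρstar * (1 + ρstar) = 1 - 3 * ρstar ^ 2 * (1 + ρstar))
    (hηpos : 0 < η) (hηroot : 1 - 3 * η ^ 2 * (1 + η) = 0)
    (hmesh : ∀ k : ℕ, 2 ≤ k →
      (ρstar < rho t k ∧ rho t k < η ∧ ρstar < rho t (k + 1) ∧
        rho t (k + 1) ≤ rho t k ^ 2 * (1 + rho t k) /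
          (1 - 3 * rho t k ^ 2 * (1 + rho t k))) ∨
      (η ≤ rho t k ∧ ρstar < rho t (k + 1))) :
    (∀ k j : ℕ, 2 ≤ j → j ≤ k - 1 →
      Mentry α t k j - Mentry α t k (j - 1)
        ≥ α * tau t j / (tau t j + tau t (j + 1)) *
            ∫ s in (0:ℝ)..1,
              (tau t j + tau t (j + 1) - s * tau t j) * (1 - s) *
                (tstar α t k - t (j - 1) - s * tau t j) ^ (-α - 1)) ∧
    (∀ k : ℕ, 2 ≤ k →
      Mentry α t k k - Mentry α t k (k - 1)
        ≥ α / (2 * (1 - α) * ((1 - α / 2) * tau t k) ^ α)) := by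
  have h := Mentry_diff_lower_bound_general hα.1.le (hα.2.trans one_lt_two) hmono fun k hk ↦
    step_ratio_bound_of_lt_or_le hηpos.le hηroot (rho_pos hmono hk).le (rho_pos hmono (by lia)).le
      ((hmesh k hk).imp (fun h ↦ ⟨h.2.1, h.2.2.2⟩) And.left)
  exact ⟨h.1, h.2 hα.2.ne⟩
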